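/- arXiv:0911.0533 — 2 statements merged into one kernel-verified Lean document; each statement's English description precedes it below -/
import Mathlib

section
/- Let 0 ≤ β < 1 and n ∈ ℕ. If f ∈ A satisfies Re((Dⁿ⁺¹f)(z)/z) > β for all z ∈ E \ {0}, then Re((Dⁿf)(z)/z) > 2(1−β)·ln 2 + 2β − 1 for all z ∈ E \ {0}. (Corollary 1: T_{n+1}¹(β) ⊆ T_n¹(2(1−β)ln 2 + 2β − 1).) -/
open Complex Metric

/-- The Salagean derivative operator: `(Dg)(z) = z * g'(z)`. -/
noncomputable def salagean (g : ℂ → ℂ) : ℂ → ℂ := fun z => z * deriv g z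

lemma salagean_iter_props (f : ℂ → ℂ) (hf : AnalyticOnNhd ℂ f (ball (0 : ℂ) 1))
    (hf0 : f 0 = 0) (hf1 : deriv f 0 = 1) (n : ℕ) :
    AnalyticOnNhd ℂ (salagean^[n] f) (ball (0 : ℂ) 1) ∧ salagean^[n] f 0 = 0 ∧
      deriv (salagean^[n] f) 0 = 1 := by
  induction n with
  | zero => exact ⟨hf, hf0, hf1⟩
  | succ k ih =>
    obtain ⟨h1, h2, h3⟩ := ih
    rw [Function.iterate_succ_apply']
    refine ⟨?_, by simp [salagean], ?_⟩
    · exact analyticOnNhd_id.mul h1.deriv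
    · have hd : DifferentiableAt ℂ (deriv (salagean^[k] f)) 0 :=
        (h1.deriv 0 (by simp)).differentiableAt
      have := (hasDerivAt_id (0 : ℂ)).mul hd.hasDerivAt
      have h4 : HasDerivAt (salagean (salagean^[k] f)) 1 0 := by
        refine HasDerivAt.congr_deriv this ?_
        simp [h3]
      exact h4.deriv

lemma re_bound (q : ℂ → ℂ) (hq : DifferentiableOn ℂ q (ball (0 : ℂ) 1)) (hq0 : q 0 = 1)
    (hre : ∀ z ∈ ball (0 : ℂ) 1, 0 < (q z).re) (z : ℂ) (hz : ‖z‖ < 1) :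
    1 - ‖z‖ ≤ (1 + ‖z‖) * (q z).re := by
  have hne : ∀ z ∈ ball (0 : ℂ) 1, q z + 1 ≠ 0 := by
    intro z hz h0
    have := congrArg Complex.re h0
    simp at this
    linarith [hre z hz]
  have key := Complex.norm_le_norm_of_mapsTo_ball (f := fun z => (q z - 1) / (q z + 1))
    (R := 1) (z := z) ((hq.sub_const 1).div (hq.add_const 1) hne) ?_ (by simp [hq0]) hz
  · have hzb : z ∈ ball (0 : ℂ) 1 := by simpa using hz
    have hp : 0 < ‖q z + 1‖ := norm_pos_iff.mpr (hne z hzb)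
    rw [norm_div, div_le_iff₀ hp] at key
    have h2 : ‖q z - 1‖ ^ 2 ≤ ‖z‖ ^ 2 * ‖q z + 1‖ ^ 2 := by
      rw [← mul_pow]; gcongr
    rw [Complex.sq_norm (q z - 1), Complex.sq_norm (q z + 1), Complex.normSq_apply, Complex.normSq_apply] at h2
    simp only [Complex.sub_re, Complex.sub_im, Complex.add_re, Complex.add_im,
      Complex.one_re, Complex.one_im] at h2
    have hr := norm_nonneg z
    have hx := hre z hzb
    generalize ‖z‖ = r at *
    generalize (q z).re = x at *
    generalize (q z).im = y at *
    by_contra! hc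
    have hc2 : (1 - r) * x < 1 + r := by nlinarith
    have h3 : 0 < ((1 - r) - (1 + r) * x) * ((1 + r) - (1 - r) * x) :=
      mul_pos (by linarith) (by linarith)
    have h4 : 0 ≤ (1 - r ^ 2) * (y * y) := mul_nonneg (by nlinarith) (mul_self_nonneg y)
    nlinarith
  · intro w hw
    have hp : 0 < ‖q w + 1‖ := norm_pos_iff.mpr (hne w hw)
    simp only [mem_closedBall, dist_zero_right]
    rw [norm_div, div_le_one hp]
    apply le_of_sq_le_sq _ hp.le
    rw [Complex.sq_norm, Complex.sq_norm, Complex.normSq_apply, Complex.normSq_apply]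
    simp only [Complex.sub_re, Complex.sub_im, Complex.add_re, Complex.add_im,
      Complex.one_re, Complex.one_im]
    nlinarith [hre w hw]

/-- Corollary 1: `T_{n+1}¹(β) ⊆ T_n¹(2(1−β)ln 2 + 2β − 1)`. -/
theorem inclusion_alpha_one (β : ℝ) (hβ0 : 0 ≤ β) (hβ1 : β < 1) (n : ℕ)
    (f : ℂ → ℂ) (hf : AnalyticOnNhd ℂ f (ball (0 : ℂ) 1))
    (hf0 : f 0 = 0) (hf1 : deriv f 0 = 1)
    (h : ∀ z ∈ ball (0 : ℂ) 1 \ {0}, β < (salagean^[n + 1] f z / z).re) :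
    ∀ z ∈ ball (0 : ℂ) 1 \ {0},
      2 * (1 - β) * Real.log 2 + 2 * β - 1 < (salagean^[n] f z / z).re := by
  obtain ⟨hg, hg0, hg1⟩ := salagean_iter_props f hf hf0 hf1 n
  rw [Function.iterate_succ'] at h
  simp only [Function.comp] at h
  generalize salagean^[n] f = g at *
  have hre : ∀ z ∈ ball (0 : ℂ) 1, β < (deriv g z).re := by
    intro z hz
    by_cases hz0 : z = 0
    · subst hz0; simpa [hg1] using hβ1
    · have := h z ⟨hz, hz0⟩
      simpa [salagean, hz0] using this
  have hb : 0 < 1 - β := by linarith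
  have hbound : ∀ z : ℂ, ‖z‖ < 1 →
      (1 - β) * (1 - ‖z‖) ≤ (1 + ‖z‖) * ((deriv g z).re - β) := by
    intro z hz
    have e : ∀ z, (((1 - β)⁻¹ : ℝ) * (deriv g z - β) : ℂ).re
        = (1 - β)⁻¹ * ((deriv g z).re - β) := by
      intro z
      rw [Complex.re_ofReal_mul]; simp
    have := re_bound (fun z => ((1 - β)⁻¹ : ℝ) * (deriv g z - β))
      ((hg.deriv.differentiableOn.sub_const _).const_mul _) ?_ ?_ z hz
    · rw [e] at this
      have h2 := mul_le_mul_of_nonneg_left this hb.le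
      refine h2.trans_eq ?_
      field_simp
    · rw [hg1]
      have : (1 - β : ℂ) ≠ 0 := by exact_mod_cast hb.ne'
      push_cast
      exact inv_mul_cancel₀ this
    · intro w hw
      rw [e]
      exact mul_pos (inv_pos.mpr hb) (by linarith [hre w hw])
  rintro z ⟨hz, hz0⟩
  have hz0 : z ≠ 0 := hz0
  have hz1 : ‖z‖ < 1 := by simpa using hz
  have hzp : 0 < ‖z‖ := norm_pos_iff.mpr hz0
  have hn : ∀ t ∈ Set.Icc (0 : ℝ) 1, ‖(t : ℂ) * z‖ = t * ‖z‖ := by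
    intro t ht
    rw [norm_mul, Complex.norm_real, Real.norm_of_nonneg ht.1]
  have hlt : ∀ t ∈ Set.Icc (0 : ℝ) 1, ‖(t : ℂ) * z‖ < 1 := by
    intro t ht
    rw [hn t ht]
    nlinarith [ht.1, ht.2]
  let F : ℝ → ℝ := fun t =>
    (g (t * z) / z).re - (β * t + (1 - β) * (2 * Real.log (1 + t) - t))
  have hF : ∀ t ∈ Set.Icc (0 : ℝ) 1, HasDerivAt F
      ((deriv g (t * z)).re - (β * 1 + (1 - β) * (2 * (1 / (1 + t)) - 1))) t := by
    intro t ht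
    have h1 : HasDerivAt g (deriv g (t * z)) ((t : ℂ) * z) :=
      (hg _ (by simpa using hlt t ht)).differentiableAt.hasDerivAt
    have h2 : HasDerivAt (fun w : ℂ => w * z) (1 * z) (t : ℂ) := (hasDerivAt_id _).mul_const z
    have h3 : HasDerivAt (fun w : ℂ => g (w * z) / z) (deriv g (t * z)) (t : ℂ) := by
      have := (HasDerivAt.comp (t : ℂ) h1 h2).div_const z
      refine HasDerivAt.congr_deriv this ?_
      field_simp
    have h4 := h3.real_of_complex
    have h5 : HasDerivAt (fun s : ℝ => Real.log (1 + s)) (1 / (1 + t)) t :=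
      ((hasDerivAt_id t).const_add 1).log (by have := ht.1; simp; linarith)
    exact h4.sub (((hasDerivAt_id t).const_mul β).add
      (((h5.const_mul 2).sub (hasDerivAt_id t)).const_mul (1 - β)))
  have hmono : StrictMonoOn F (Set.Icc 0 1) := by
    apply strictMonoOn_of_deriv_pos (convex_Icc 0 1)
    · exact fun t ht => (hF t ht).continuousAt.continuousWithinAt
    · intro t ht
      rw [interior_Icc] at ht
      have htI := Set.Ioo_subset_Icc_self ht
      rw [(hF t htI).deriv]
      have hB := hbound _ (hlt t htI)
      rw [hn t htI] at hB
      have ht0 := ht.1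
      set x := (deriv g (t * z)).re
      have hr : t * ‖z‖ < t := by nlinarith
      have hr0 : 0 < t * ‖z‖ := by positivity
      have ht1 : 0 < 1 + t := by linarith
      have e : x - (β * 1 + (1 - β) * (2 * (1 / (1 + t)) - 1))
          = ((1 + t) * (x - β) - (1 - β) * (1 - t)) / (1 + t) := by
        field_simp; ring
      rw [e]
      apply div_pos _ ht1
      have hx : 0 < x - β := by
        have := hre (t * z) (by simpa using hlt t htI)
        simp only [x]; linarith
      generalize t * ‖z‖ = r at *
      nlinarith [mul_pos hx (sub_pos.mpr hr), mul_pos hb (sub_pos.mpr hr)]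
  have := hmono (by simp : (0 : ℝ) ∈ Set.Icc (0 : ℝ) 1) (by simp : (1 : ℝ) ∈ Set.Icc (0 : ℝ) 1)
    one_pos
  simp only [F] at this
  norm_num [hg0] at this
  linarith
end

section
/- Let 0 ≤ β < 1 and let f be analytic on the unit disk E with f(0) = 0 and f′(0) = 1. If Re f′(z) > β for all z ∈ E, then Re(f(z)/z) > 2(1−β)·ln 2 + 2β − 1 for all z ∈ E \ {0}. -/
open Complex Metric

lemma re_deriv_aux (β : ℝ) (hβ1 : β < 1) (F : ℂ → ℂ)
    (hF : DifferentiableOn ℂ F (ball (0 : ℂ) 1)) (hF0 : F 0 = 1)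
    (h : ∀ z ∈ ball (0 : ℂ) 1, β < (F z).re) (z : ℂ) (hz : z ∈ ball (0 : ℂ) 1) :
    (1 - β) * (1 - ‖z‖) ≤ ((F z).re - β) * (1 + ‖z‖) := by
  have hne : ∀ u ∈ ball (0 : ℂ) 1, F u + 1 - 2 * (β : ℂ) ≠ 0 := by
    intro u hu h0
    have h1 := h u hu
    have h2 := congrArg Complex.re h0
    simp at h2
    linarith
  have sq1 : ∀ u, ‖F u - 1‖ ^ 2 = ((F u).re - 1) ^ 2 + (F u).im ^ 2 := by
    intro u
    rw [Complex.sq_norm, Complex.normSq_apply]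
    simp
    ring
  have sq2 : ∀ u, ‖F u + 1 - 2 * (β : ℂ)‖ ^ 2
      = ((F u).re + 1 - 2 * β) ^ 2 + (F u).im ^ 2 := by
    intro u
    rw [Complex.sq_norm, Complex.normSq_apply]
    simp
    ring
  have key : ‖(F z - 1) / (F z + 1 - 2 * (β : ℂ))‖ ≤ ‖z‖ := by
    refine Complex.norm_le_norm_of_mapsTo_ball (R := 1)
      (f := fun u => (F u - 1) / (F u + 1 - 2 * (β : ℂ))) ?_ ?_ ?_ ?_
    · exact (hF.sub_const _).div ((hF.add_const _).sub_const _) hne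
    · intro u hu
      have hp := norm_pos_iff.2 (hne u hu)
      have h1 := h u hu
      have : ‖(F u - 1) / (F u + 1 - 2 * (β : ℂ))‖ < 1 := by
        rw [norm_div, div_lt_one hp]
        apply lt_of_pow_lt_pow_left₀ 2 hp.le
        rw [sq1, sq2]
        nlinarith
      first
        | simpa using this
        | simpa using this.le
    · simp [hF0]
    · simpa using hz
  have hp := norm_pos_iff.2 (hne z hz)
  rw [norm_div, div_le_iff₀ hp] at key
  have k2 := pow_le_pow_left₀ (norm_nonneg _) key 2
  rw [mul_pow, sq1, sq2] at k2
  have hz1 : ‖z‖ < 1 := by simpa using hz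
  have h1 := h z hz
  have hn := norm_nonneg z
  have k3 : (1 - (F z).re) ^ 2 ≤ (‖z‖ * ((F z).re + 1 - 2 * β)) ^ 2 := by
    have : ‖z‖ ^ 2 * (F z).im ^ 2 ≤ 1 * (F z).im ^ 2 := by
      gcongr
      nlinarith
    nlinarith
  have k4 := abs_le_of_sq_le_sq' k3 (mul_nonneg hn (by linarith))
  nlinarith [k4.2]

/-- Corollary 2: if `f(0) = 0`, `f'(0) = 1` and `Re f'(z) > β` on the unit disk,
then `Re(f(z)/z) > 2(1−β)ln 2 + 2β − 1` on the punctured unit disk. -/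
theorem re_quotient_lower_bound (β : ℝ) (hβ0 : 0 ≤ β) (hβ1 : β < 1)
    (f : ℂ → ℂ) (hf : AnalyticOnNhd ℂ f (ball (0 : ℂ) 1))
    (hf0 : f 0 = 0) (hf1 : deriv f 0 = 1)
    (h : ∀ z ∈ ball (0 : ℂ) 1, β < (deriv f z).re) :
    ∀ z ∈ ball (0 : ℂ) 1 \ {0},
      2 * (1 - β) * Real.log 2 + 2 * β - 1 < (f z / z).re := by
  rintro z ⟨hz, hz0⟩
  have hz0 : z ≠ 0 := by simpa using hz0
  have hz1 : ‖z‖ < 1 := by simpa using hz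
  have hmem : ∀ t ∈ Set.Icc (0 : ℝ) 1, (t : ℂ) * z ∈ ball (0 : ℂ) 1 := by
    intro t ht
    have : ‖(t : ℂ) * z‖ < 1 := by
      rw [norm_mul, Complex.norm_real, Real.norm_of_nonneg ht.1]
      nlinarith [ht.2, norm_nonneg z]
    simpa using this
  let G : ℝ → ℝ := fun t => (f ((t : ℂ) * z) / z).re
    - (β * t + (1 - β) * (2 * Real.log (1 + t) - t))
  have hG : ∀ t ∈ Set.Icc (0 : ℝ) 1, HasDerivAt G ((deriv f ((t : ℂ) * z)).re
      - (β * 1 + (1 - β) * (2 * (1 / (1 + t)) - 1))) t := by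
    intro t ht
    have hd := (hf _ (hmem t ht)).differentiableAt.hasDerivAt
    have h1 : HasDerivAt (fun s : ℂ => s * z) (1 * z) (t : ℂ) :=
      (hasDerivAt_id _).mul_const z
    have h2 : HasDerivAt (fun s : ℂ => f (s * z) / z)
        (deriv f ((t : ℂ) * z) * (1 * z) / z) (t : ℂ) :=
      (HasDerivAt.comp (t : ℂ) hd h1).div_const z
    have h3 := h2.real_of_complex
    have e : deriv f ((t : ℂ) * z) * (1 * z) / z = deriv f ((t : ℂ) * z) := by
      field_simp
    rw [e] at h3
    have h4 : HasDerivAt (fun s : ℝ => Real.log (1 + s)) (1 / (1 + t)) t :=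
      ((hasDerivAt_id t).const_add 1).log (by have := ht.1; simp; linarith)
    exact h3.sub (((hasDerivAt_id t).const_mul β).add
      (((h4.const_mul 2).sub (hasDerivAt_id t)).const_mul (1 - β)))
  have hmono : StrictMonoOn G (Set.Icc 0 1) := by
    apply strictMonoOn_of_deriv_pos (convex_Icc 0 1)
    · exact fun t ht => (hG t ht).continuousAt.continuousWithinAt
    · intro t ht
      rw [interior_Icc] at ht
      have ht' := Set.Ioo_subset_Icc_self ht
      rw [(hG t ht').deriv]
      have hd : DifferentiableOn ℂ (deriv f) (ball 0 1) := hf.deriv.differentiableOn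
      have k := re_deriv_aux β hβ1 (deriv f) hd hf1 h _ (hmem t ht')
      have hn : ‖(t : ℂ) * z‖ < t := by
        rw [norm_mul, Complex.norm_real, Real.norm_of_nonneg ht'.1]
        nlinarith [ht.1]
      have hh := h _ (hmem t ht')
      have ht0 : 0 < 1 + t := by linarith [ht.1]
      have k2 : (1 - β) * (1 - t) < ((deriv f ((t : ℂ) * z)).re - β) * (1 + t) := by
        nlinarith
      have : (deriv f ((t : ℂ) * z)).re - (β * 1 + (1 - β) * (2 * (1 / (1 + t)) - 1))
          = (((deriv f ((t : ℂ) * z)).re - β) * (1 + t) - (1 - β) * (1 - t)) / (1 + t) := by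
        field_simp
        ring
      rw [this]
      exact div_pos (by linarith) ht0
  have := hmono (Set.left_mem_Icc.2 zero_le_one) (Set.right_mem_Icc.2 zero_le_one) zero_lt_one
  have e2 : (1 : ℝ) + 1 = 2 := by norm_num
  simp only [G, Complex.ofReal_zero, Complex.ofReal_one, zero_mul, one_mul, hf0, zero_div,
    Complex.zero_re, e2, add_zero, Real.log_one] at this
  linarith
end
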